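/- Let ρ = exp(−H₀) and ρ_X = exp(−(H₀+X)) be finite faithful weights on a separable Hilbert space H with X a bounded operator satisfying the Araki condition for ρ, and set M = ‖X‖_A = sup_{|t|<1/2} ‖ρ^t X ρ^{−t}‖. Then, as quadratic forms, ρ^{1/2} ρ_X^{−1} ρ^{1/2} ≤ e^M · I, hence ρ_X^{−1} ≤ e^M ρ^{−1}, and by operator-monotone decrease of the inverse map, ρ_X ≥ e^{−M} ρ in the Loewner order. -/

import Mathlib

open scoped InnerProductSpace ENNReal NNReal
open MeasureTheory Metric Filter

noncomputable section

variable {H : Type*} [NormedAddCommGroup H] [InnerProductSpace ℂ H] [CompleteSpace H]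
  [TopologicalSpace.SeparableSpace H]

/-- The real power `ρ ^ t` (for `t ≥ 0`) of a positive operator `ρ`, via the continuous
functional calculus. -/
def opow (ρ : H →L[ℂ] H) (t : ℝ) : H →L[ℂ] H := cfc (fun x : ℝ => x ^ t) ρ

/-- The (real) trace of an operator, computed along the Hilbert basis `b`. -/
def trElem {ι : Type*} (b : HilbertBasis ι ℂ H) (T : H →L[ℂ] H) : ℝ :=
  ∑' i, (⟪b i, T (b i)⟫_ℂ).re

/-- `ρ` is a finite faithful weight: a positive, injective, trace-class operator
(trace-class being witnessed by summability of the diagonal in the Hilbert basis `b`). -/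
def IsFiniteWeight {ι : Type*} (b : HilbertBasis ι ℂ H) (ρ : H →L[ℂ] H) : Prop :=
  0 ≤ ρ ∧ Function.Injective (⇑ρ) ∧ Summable (fun i => (⟪b i, ρ (b i)⟫_ℂ).re)

/-- `σ` is nearby `ρ`: there is `C > 1` with `C⁻¹ ρ ≤ σ ≤ C ρ` in the Loewner order. -/
def IsNearby (σ ρ : H →L[ℂ] H) : Prop :=
  ∃ C : ℝ, 1 < C ∧ C⁻¹ • ρ ≤ σ ∧ σ ≤ C • ρ

/-- `F` is the Araki family `t ↦ ρ^t X ρ^{-t}` of `X` relative to `ρ`: a bounded holomorphic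
`B(H)`-valued extension to the disc `|t| < 1/2` of `t ↦ ρ^t X ρ^{-t}`, the latter being
expressed by `F t * ρ^t = ρ^t * X` and `ρ^t * F (-t) = X * ρ^t` for real `0 ≤ t < 1/2`. -/
def IsArakiFamily (ρ X : H →L[ℂ] H) (F : ℂ → H →L[ℂ] H) : Prop :=
  DifferentiableOn ℂ F (ball (0:ℂ) (1/2)) ∧
  (∃ M : ℝ, ∀ t ∈ ball (0:ℂ) (1/2), ‖F t‖ ≤ M) ∧
  (∀ t : ℝ, 0 ≤ t → t < 1/2 → F (t:ℂ) * opow ρ t = opow ρ t * X) ∧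
  (∀ t : ℝ, 0 ≤ t → t < 1/2 → opow ρ t * F (-(t:ℂ)) = X * opow ρ t)

/-- `X` satisfies the Araki condition for `ρ`. -/
def SatisfiesAraki (ρ X : H →L[ℂ] H) : Prop := ∃ F, IsArakiFamily ρ X F

/-- The Araki norm `‖X‖_A = sup_{|t| < 1/2} ‖ρ^t X ρ^{-t}‖`. -/
def arakiNorm (ρ X : H →L[ℂ] H) : ℝ :=
  sInf {M : ℝ | 0 ≤ M ∧ ∃ F, IsArakiFamily ρ X F ∧ ∀ t ∈ ball (0:ℂ) (1/2), ‖F t‖ ≤ M}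

/-- `σ = exp (-(H₀ + X))` where `ρ = exp (-H₀)`: the semigroup `t ↦ σ^t` is the mild
(Duhamel) solution of the semigroup `t ↦ ρ^t` perturbed by the bounded operator `-X`,
i.e. `σ^t = ρ^t - ∫_0^t ρ^{t-s} X σ^s ds` for all `t ≥ 0`. -/
def IsExpPerturbed (ρ σ X : H →L[ℂ] H) : Prop :=
  ∀ t : ℝ, 0 ≤ t →
    opow σ t = opow ρ t - ∫ s in (0:ℝ)..t, opow ρ (t - s) * X * opow σ s

/-- The truncation `x ↦ -log (x + e^{-n})` of `-log`; it increases pointwise to `-log x`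
as `n → ∞` and is operator anti-monotone. -/
def negLogTrunc (n : ℕ) (x : ℝ) : ℝ := - Real.log (x + Real.exp (-(n:ℝ)))

/-- The regularised quadratic form `⟪ξ, (-log (ρ + e^{-n})) ξ⟫` of `H₀ = -log ρ`. -/
def negLogFormSeq (ρ : H →L[ℂ] H) (ξ : H) (n : ℕ) : ℝ :=
  (⟪ξ, (cfc (negLogTrunc n) ρ) ξ⟫_ℂ).re

/-- `ξ` lies in the form domain `Q(H₀) = Dom (H₀^{1/2})` of `H₀ = -log ρ`. -/
def InFormDomain (ρ : H →L[ℂ] H) (ξ : H) : Prop :=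
  BddAbove (Set.range (negLogFormSeq ρ ξ))

/-- The value `⟪ξ, H₀ ξ⟫` of the quadratic form of `H₀ = -log ρ` (a monotone limit). -/
def negLogForm (ρ : H →L[ℂ] H) (ξ : H) : ℝ := ⨆ n, negLogFormSeq ρ ξ n

/-- The regularised quadratic form `⟪ξ, (σ + e^{-n})⁻¹ ξ⟫` of `σ⁻¹`. -/
def invFormSeq (σ : H →L[ℂ] H) (ξ : H) (n : ℕ) : ℝ :=
  (⟪ξ, (cfc (fun x : ℝ => (x + Real.exp (-(n:ℝ)))⁻¹) σ) ξ⟫_ℂ).re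

/-- The quadratic form `⟪ξ, σ⁻¹ ξ⟫ ∈ [0, ∞]` of the (possibly unbounded) inverse `σ⁻¹`
of the injective positive operator `σ`, as a monotone limit of regularisations. -/
def invForm (σ : H →L[ℂ] H) (ξ : H) : ℝ≥0∞ :=
  ⨆ n : ℕ, ENNReal.ofReal (invFormSeq σ ξ n)

/-- `S` is the relative entropy `S(ρ|σ) = Tr (ρ (log ρ - log σ))`, obtained as the limit of
the regularised quantities `Tr (ρ (log (ρ + e^{-n}) - log (σ + e^{-n})))`. -/
def IsRelativeEntropy {ι : Type*} (b : HilbertBasis ι ℂ H) (ρ σ : H →L[ℂ] H) (S : ℝ) : Prop :=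
  Tendsto (fun n : ℕ => trElem b (ρ * (cfc (negLogTrunc n) σ - cfc (negLogTrunc n) ρ)))
    atTop (nhds S)

/-- The `n`-th term of the Matsubara (Dyson/expansional) series: the integral over the
ordered simplex `0 ≤ s₁ ≤ ⋯ ≤ sₙ ≤ 1` (of volume `1/n!`) of the product
`F(s₁ - 1/2) ⋯ F(sₙ - 1/2)`, where `F t = ρ^t X ρ^{-t}`. -/
def matsubaraTerm (F : ℂ → H →L[ℂ] H) (n : ℕ) : H →L[ℂ] H :=
  ∫ s in {s : Fin n → ℝ | (∀ i, s i ∈ Set.Icc (0:ℝ) 1) ∧ Monotone s},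
    (List.ofFn fun i => F (((s i - 1/2 : ℝ) : ℂ))).prod

/-!
With `F r = ρ^r X ρ^{-r}`, the Duhamel equation says that `U(t) = ρ^t σ^{a-t}` satisfies
`U(t) = σ^a + ∫_0^t ρ^r X σ^{a-r} dr`, and `ρ^r X σ^{a-r} = F(r) U(r)`. So `U' = F U`, and
Grönwall's inequality compares the endpoints: `‖ρ^a ζ‖ ≤ e^{a M} ‖σ^a ζ‖`. For `a = 1/2` the square
of this estimate is `ρ ≤ e^M σ`. Both bounds on the form of `σ⁻¹` follow by inverting
`ρ + e^M ε ≤ e^M (σ + ε)` and letting `ε → 0`.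
-/

section Gronwall

variable {V : Type*} [NormedAddCommGroup V] [NormedSpace ℝ V] [CompleteSpace V]

lemma hasDerivWithinAt_Ici_integral {g : ℝ → V} {a b x : ℝ}
    (hint : IntervalIntegrable g volume a b) (hg : ContinuousOn g (Set.Ico a b))
    (hx : x ∈ Set.Ico a b) :
    HasDerivWithinAt (fun t => ∫ r in a..t, g r) (g x) (Set.Ici x) x := by
  have hIco : Set.Ico a b ∈ nhdsWithin x (Set.Ici x) :=
    mem_of_superset (Ico_mem_nhdsGE hx.2) (Set.Ico_subset_Ico_left hx.1)
  have hIoi : Set.Ico a b ∈ nhdsWithin x (Set.Ioi x) :=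
    nhdsWithin_mono _ Set.Ioi_subset_Ici_self hIco
  refine intervalIntegral.integral_hasDerivWithinAt_right (t := Set.Ioi x) ?_
    ⟨_, hIoi, hg.aestronglyMeasurable measurableSet_Ico⟩
    ((hg x hx).mono_of_mem_nhdsWithin hIoi)
  exact hint.mono_set (Set.uIcc_subset_uIcc_left (Set.mem_uIcc_of_le hx.1 hx.2.le))

lemma norm_le_exp_mul_norm_of_eq_add_integral {u g : ℝ → V} {a b M : ℝ} (hab : a ≤ b)
    (hint : IntervalIntegrable g volume a b) (hg : ContinuousOn g (Set.Ico a b))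
    (hu : ∀ t ∈ Set.Icc a b, u t = u a + ∫ r in a..t, g r)
    (hbound : ∀ r ∈ Set.Ico a b, ‖g r‖ ≤ M * ‖u r‖) :
    ‖u b‖ ≤ Real.exp (M * (b - a)) * ‖u a‖ := by
  have hcont : ContinuousOn u (Set.Icc a b) := by
    rw [← Set.uIcc_of_le hab] at hu ⊢
    have hprim := intervalIntegral.continuousOn_primitive_interval' hint Set.left_mem_uIcc
    exact (hprim.const_add (u a)).congr hu
  have hderiv : ∀ x ∈ Set.Ico a b, HasDerivWithinAt u (g x) (Set.Ici x) x := fun x hx => by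
    refine ((hasDerivWithinAt_Ici_integral hint hg hx).const_add (u a)).congr_of_eventuallyEq ?_
      (hu x ⟨hx.1, hx.2.le⟩)
    filter_upwards [Ico_mem_nhdsGE hx.2] with t ht
    exact hu t ⟨hx.1.trans ht.1, ht.2.le⟩
  have hgronwall := norm_le_gronwallBound_of_norm_deriv_right_le (ε := 0) hcont hderiv le_rfl
    (by simpa only [add_zero] using hbound) b ⟨hab, le_rfl⟩
  rwa [gronwallBound_ε0, mul_comm] at hgronwall

end Gronwall

section RegularisedInverse

variable {A : Type*} [CStarAlgebra A] [PartialOrder A] [StarOrderedRing A]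

/-- The regularised inverse `(a + ε)⁻¹` of a nonnegative element `a`, encoded by the functional
calculus so that `invFormSeq σ ξ n` unfolds to the form of `regInv σ (exp (-n))` at `ξ`. -/
def regInv (a : A) (ε : ℝ) : A := cfc (fun x : ℝ => (x + ε)⁻¹) a

variable {a b : A} {c δ ε : ℝ}

lemma add_pos_of_mem_spectrum {x : ℝ} (ha : 0 ≤ a) (hε : 0 < ε) (hx : x ∈ spectrum ℝ a) :
    0 < x + ε :=
  add_pos_of_nonneg_of_pos (spectrum_nonneg_of_nonneg ha hx) hε

lemma continuousOn_inv_add_spectrum (ha : 0 ≤ a) (hε : 0 < ε) :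
    ContinuousOn (fun x : ℝ => (x + ε)⁻¹) (spectrum ℝ a) :=
  ContinuousOn.inv₀ (by fun_prop) fun _ hx => (add_pos_of_mem_spectrum ha hε hx).ne'

lemma regInv_eq_ringInverse (ha : 0 ≤ a) (hε : 0 < ε) :
    regInv a ε = Ring.inverse (a + algebraMap ℝ A ε) := by
  rw [regInv, cfc_inv (fun x => x + ε) a fun x hx => (add_pos_of_mem_spectrum ha hε hx).ne',
    cfc_add_const ε (fun x => x) a, cfc_id' ℝ a]

lemma regInv_le_regInv (ha : 0 ≤ a) (hab : a ≤ b) (hδ : 0 < δ) (hδε : δ ≤ ε) :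
    regInv b ε ≤ regInv a δ := by
  rw [regInv_eq_ringInverse ha hδ, regInv_eq_ringInverse (ha.trans hab) (hδ.trans_le hδε)]
  exact CStarAlgebra.ringInverse_le_ringInverse (add_le_add hab (algebraMap_mono A hδε))
    ((isStrictlyPositive_algebraMap hδ).nonneg_add ha)

lemma regInv_smul (ha : 0 ≤ a) (hc : 0 < c) (hε : 0 < ε) :
    regInv (c • a) (c * ε) = c⁻¹ • regInv a ε := by
  have hcont : ContinuousOn (fun x : ℝ => (x + c * ε)⁻¹) ((c • ·) '' spectrum ℝ a) := by
    refine ContinuousOn.inv₀ (by fun_prop) ?_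
    rintro _ ⟨x, hx, rfl⟩
    simpa only [smul_eq_mul, ← mul_add] using
      (mul_pos hc (add_pos_of_mem_spectrum ha hε hx)).ne'
  rw [regInv, regInv, ← cfc_comp_smul c _ a hcont,
    ← cfc_smul c⁻¹ _ a (continuousOn_inv_add_spectrum ha hε)]
  simp only [smul_eq_mul, ← mul_add, mul_inv]

lemma regInv_le_smul_regInv (ha : 0 ≤ a) (hb : 0 ≤ b) (hc : 0 < c) (hab : a ≤ c • b)
    (hδ : 0 < δ) (hε : 0 < ε) (hδε : δ ≤ c * ε) : regInv b ε ≤ c • regInv a δ :=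
  calc regInv b ε = c • regInv (c • b) (c * ε) := by
        rw [regInv_smul hb hc hε, smul_inv_smul₀ hc.ne']
    _ ≤ c • regInv a δ := smul_le_smul_of_nonneg_left (regInv_le_regInv ha hab hδ hδε) hc.le

end RegularisedInverse

lemma re_inner_apply_le_of_le {𝕜 V : Type*} [RCLike 𝕜] [NormedAddCommGroup V]
    [InnerProductSpace 𝕜 V] {S T : V →L[𝕜] V} (h : S ≤ T) (ξ : V) :
    RCLike.re ⟪ξ, S ξ⟫_𝕜 ≤ RCLike.re ⟪ξ, T ξ⟫_𝕜 := by
  have hpos := ((ContinuousLinearMap.le_def S T).1 h).re_inner_nonneg_right ξ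
  rwa [sub_apply, inner_sub_right, map_sub, sub_nonneg] at hpos

section PositiveOperators

variable {E : Type*} [NormedAddCommGroup E] [InnerProductSpace ℂ E] [CompleteSpace E]

section Powers

variable {ρ : E →L[ℂ] E} {s t : ℝ}

lemma isSelfAdjoint_opow (ρ : E →L[ℂ] E) (t : ℝ) : IsSelfAdjoint (opow ρ t) :=
  cfc_predicate _ ρ

lemma opow_eq_rpow (hρ : 0 ≤ ρ) (t : ℝ) : opow ρ t = ρ ^ t :=
  (CFC.rpow_eq_cfc_real hρ).symm

lemma opow_zero (hρ : 0 ≤ ρ) : opow ρ 0 = 1 := by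
  rw [opow_eq_rpow hρ, CFC.rpow_zero ρ]

lemma opow_one (hρ : 0 ≤ ρ) : opow ρ 1 = ρ := by
  rw [opow_eq_rpow hρ, CFC.rpow_one ρ]

lemma opow_add (hρ : 0 ≤ ρ) (hs : 0 ≤ s) (ht : 0 ≤ t) :
    opow ρ (s + t) = opow ρ s * opow ρ t := by
  rw [opow, opow, opow, ← cfc_mul _ _ ρ (Real.continuous_rpow_const hs).continuousOn
    (Real.continuous_rpow_const ht).continuousOn]
  exact cfc_congr fun x hx => Real.rpow_add_of_nonneg (spectrum_nonneg_of_nonneg hρ hx) hs ht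

lemma norm_opow_le (hρ : 0 ≤ ρ) (hs : 0 ≤ s) (hst : s ≤ t) : ‖opow ρ s‖ ≤ max 1 ‖ρ‖ ^ t := by
  refine norm_cfc_le (by positivity) fun x hx => ?_
  have hx0 : 0 ≤ x := spectrum_nonneg_of_nonneg hρ hx
  have hxρ : x ≤ ‖ρ‖ := by
    have hnorm := spectrum.norm_le_norm_mul_of_mem hx
    rw [Real.norm_of_nonneg hx0] at hnorm
    exact hnorm.trans (mul_le_of_le_one_right (norm_nonneg _) ContinuousLinearMap.norm_id_le)
  calc ‖x ^ s‖ = x ^ s := Real.norm_of_nonneg (Real.rpow_nonneg hx0 s)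
    _ ≤ max 1 ‖ρ‖ ^ s := Real.rpow_le_rpow hx0 (hxρ.trans (le_max_right 1 ‖ρ‖)) hs
    _ ≤ max 1 ‖ρ‖ ^ t := Real.rpow_le_rpow_of_exponent_le (le_max_left 1 ‖ρ‖) hst

lemma continuousOn_opow (ρ : E →L[ℂ] E) : ContinuousOn (opow ρ) (Set.Ioi 0) := fun s hs => by
  refine continuousWithinAt_cfc_fun (f := fun (r : ℝ) (x : ℝ) => x ^ r) (fun W hW => ?_) ?_
  · have hcont : ContinuousOn (fun p : ℝ × ℝ => p.2 ^ p.1) (Set.Ioi 0 ×ˢ spectrum ℝ ρ) :=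
      continuousOn_snd.rpow continuousOn_fst fun p hp => Or.inr hp.1
    have hcompact : IsCompact (spectrum ℝ ρ) := ContinuousFunctionalCalculus.isCompact_spectrum ρ
    obtain ⟨v, hv, hvW⟩ := hcompact.mem_uniformity_of_prod
      (f := fun (r : ℝ) (x : ℝ) => x ^ r) hcont hs (symm_le_uniformity hW)
    exact mem_of_superset hv hvW
  · filter_upwards [self_mem_nhdsWithin] with r hr
    exact (Real.continuous_rpow_const (le_of_lt hr)).continuousOn

lemma re_inner_opow_add_self (hρ : 0 ≤ ρ) (hs : 0 ≤ s) (ζ : E) :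
    (⟪opow ρ (s + s) ζ, ζ⟫_ℂ).re = ‖opow ρ s ζ‖ ^ 2 := by
  rw [opow_add hρ hs hs, mul_apply_eq_comp,
    (isSelfAdjoint_opow ρ s).isSymmetric.apply_clm, inner_self_eq_norm_sq_to_K]
  norm_cast

end Powers

section Duhamel

variable {ρ σ X : E →L[ℂ] E} {a t : ℝ}

/-- The path `t ↦ ρ^t σ^{a-t}` from `σ^a` to `ρ^a`, along which the two semigroups are compared. -/
def interpolant (ρ σ : E →L[ℂ] E) (a t : ℝ) : E →L[ℂ] E := opow ρ t * opow σ (a - t)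

lemma intervalIntegrable_duhamel (hρ : 0 ≤ ρ) (hσ : 0 ≤ σ) (X : E →L[ℂ] E) (ht : 0 ≤ t) :
    IntervalIntegrable (fun s => opow ρ (t - s) * X * opow σ s) volume 0 t := by
  rw [intervalIntegrable_iff_integrableOn_Ioo_of_le ht]
  refine IntegrableOn.of_bound measure_Ioo_lt_top ?_ (max 1 ‖ρ‖ ^ t * ‖X‖ * max 1 ‖σ‖ ^ t) ?_
  · have hρcont : ContinuousOn (fun s => opow ρ (t - s)) (Set.Ioo 0 t) :=
      (continuousOn_opow ρ).comp (by fun_prop) fun s hs => sub_pos.2 hs.2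
    have hσcont : ContinuousOn (opow σ) (Set.Ioo 0 t) := (continuousOn_opow σ).mono fun s hs => hs.1
    exact ((hρcont.mul continuousOn_const).mul hσcont).aestronglyMeasurable measurableSet_Ioo
  · filter_upwards [ae_restrict_mem measurableSet_Ioo] with s hs
    calc ‖opow ρ (t - s) * X * opow σ s‖ ≤ ‖opow ρ (t - s)‖ * ‖X‖ * ‖opow σ s‖ := norm_mul₃_le
      _ ≤ max 1 ‖ρ‖ ^ t * ‖X‖ * max 1 ‖σ‖ ^ t := by
        gcongr
        · exact norm_opow_le hρ (sub_nonneg.2 hs.2.le) (sub_le_self t hs.1.le)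
        · exact norm_opow_le hσ hs.1.le hs.2.le

lemma intervalIntegrable_duhamel_reflect (hρ : 0 ≤ ρ) (hσ : 0 ≤ σ) (X : E →L[ℂ] E) (ha : 0 ≤ a) :
    IntervalIntegrable (fun r => opow ρ r * X * opow σ (a - r)) volume 0 a := by
  simpa only [sub_zero, sub_self, sub_sub_cancel] using
    ((intervalIntegrable_duhamel hρ hσ X ha).comp_sub_left a).symm

lemma interpolant_zero (hρ : 0 ≤ ρ) : interpolant ρ σ a 0 = opow σ a := by
  rw [interpolant, opow_zero hρ, one_mul, sub_zero]

lemma interpolant_self (hσ : 0 ≤ σ) : interpolant ρ σ a a = opow ρ a := by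
  rw [interpolant, sub_self, opow_zero hσ, mul_one]

lemma interpolant_eq_add_integral (hρ : 0 ≤ ρ) (hσ : 0 ≤ σ) (hσX : IsExpPerturbed ρ σ X)
    (ht : 0 ≤ t) (hta : t ≤ a) :
    interpolant ρ σ a t = opow σ a + ∫ r in (0 : ℝ)..t, opow ρ r * X * opow σ (a - r) := by
  have hadd : ∀ s, 0 ≤ s → opow σ (s + (a - t)) = opow σ s * opow σ (a - t) := fun s hs =>
    opow_add hσ hs (sub_nonneg.2 hta)
  have hduhamel : opow ρ t = opow σ t + ∫ s in (0 : ℝ)..t, opow ρ (t - s) * X * opow σ s := by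
    rw [hσX t ht, sub_add_cancel]
  have hreflect : (∫ s in (0 : ℝ)..t, opow ρ (t - s) * X * opow σ s) * opow σ (a - t) =
      ∫ r in (0 : ℝ)..t, opow ρ r * X * opow σ (a - r) :=
    calc (∫ s in (0 : ℝ)..t, opow ρ (t - s) * X * opow σ s) * opow σ (a - t)
        = ∫ s in (0 : ℝ)..t, opow ρ (t - s) * X * opow σ s * opow σ (a - t) := by
          have hint := intervalIntegrable_duhamel hρ hσ X ht
          simp only [intervalIntegral.integral_of_le ht]
          exact (integral_mul_const_of_integrable hint.1).symm
      _ = ∫ s in (0 : ℝ)..t, opow ρ (t - s) * X * opow σ (a - (t - s)) := by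
          refine intervalIntegral.integral_congr fun s hs => ?_
          rw [Set.uIcc_of_le ht] at hs
          simp only [mul_assoc, ← hadd s hs.1]
          rw [show s + (a - t) = a - (t - s) by ring]
      _ = ∫ r in (0 : ℝ)..t, opow ρ r * X * opow σ (a - r) := by
          simpa only [sub_self, sub_zero] using intervalIntegral.integral_comp_sub_left
            (a := 0) (b := t) (fun r => opow ρ r * X * opow σ (a - r)) t
  rw [interpolant, hduhamel, add_mul, hreflect, ← hadd t ht, add_sub_cancel]

lemma continuousOn_interpolant (hρ : 0 ≤ ρ) (hσ : 0 ≤ σ) (hσX : IsExpPerturbed ρ σ X)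
    (ha : 0 ≤ a) : ContinuousOn (interpolant ρ σ a) (Set.Icc 0 a) := by
  have hprim := intervalIntegral.continuousOn_primitive_interval'
    (intervalIntegrable_duhamel_reflect hρ hσ X ha) Set.left_mem_uIcc
  rw [Set.uIcc_of_le ha] at hprim
  exact (hprim.const_add (opow σ a)).congr fun t ht =>
    interpolant_eq_add_integral hρ hσ hσX ht.1 ht.2

lemma norm_opow_apply_le_exp_mul_norm {F : ℝ → E →L[ℂ] E} {M : ℝ} (hρ : 0 ≤ ρ) (hσ : 0 ≤ σ)
    (hσX : IsExpPerturbed ρ σ X) (ha : 0 ≤ a) (hFcont : ContinuousOn F (Set.Ico 0 a))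
    (hF : ∀ t ∈ Set.Ico 0 a, F t * opow ρ t = opow ρ t * X) (hM : ∀ t ∈ Set.Ico 0 a, ‖F t‖ ≤ M)
    (ζ : E) : ‖opow ρ a ζ‖ ≤ Real.exp (M * a) * ‖opow σ a ζ‖ := by
  set g : ℝ → E →L[ℂ] E := fun r => opow ρ r * X * opow σ (a - r) with hg
  have hgF : ∀ r ∈ Set.Ico 0 a, g r = F r * interpolant ρ σ a r := fun r hr => by
    rw [hg, interpolant, ← mul_assoc, hF r hr]
  have hgcont : ContinuousOn g (Set.Ico 0 a) :=
    (hFcont.mul ((continuousOn_interpolant hρ hσ hσX ha).mono Set.Ico_subset_Icc_self)).congr hgF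
  have hgint : IntervalIntegrable g volume 0 a := intervalIntegrable_duhamel_reflect hρ hσ X ha
  have hvolterra : ∀ t ∈ Set.Icc 0 a, interpolant ρ σ a t ζ =
      interpolant ρ σ a 0 ζ + ∫ r in (0 : ℝ)..t, g r ζ := fun t ht => by
    have hgint' : IntervalIntegrable g volume 0 t :=
      hgint.mono_set (Set.uIcc_subset_uIcc_left (Set.mem_uIcc_of_le ht.1 ht.2))
    rw [interpolant_eq_add_integral hρ hσ hσX ht.1 ht.2, interpolant_zero hρ,
      ← ContinuousLinearMap.intervalIntegral_apply hgint', add_apply]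
  have hgbound : ∀ r ∈ Set.Ico 0 a, ‖g r ζ‖ ≤ M * ‖interpolant ρ σ a r ζ‖ := fun r hr => by
    rw [hgF r hr]
    exact (F r).le_of_opNorm_le (hM r hr) _
  have hgζint : IntervalIntegrable (fun r => g r ζ) volume 0 a := by
    rw [intervalIntegrable_iff] at hgint ⊢
    exact hgint.apply_continuousLinearMap ζ
  simpa only [interpolant_zero hρ, interpolant_self hσ, sub_zero] using
    norm_le_exp_mul_norm_of_eq_add_integral ha hgζint (hgcont.clm_apply continuousOn_const)
      hvolterra hgbound

end Duhamel

section Forms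

variable {ρ σ : E →L[ℂ] E} {c ε : ℝ}

lemma le_smul_of_re_inner_le (hρ : IsSelfAdjoint ρ) (hσ : IsSelfAdjoint σ)
    (h : ∀ ζ, (⟪ρ ζ, ζ⟫_ℂ).re ≤ c * (⟪σ ζ, ζ⟫_ℂ).re) : ρ ≤ c • σ := by
  refine (ContinuousLinearMap.le_def _ _).2 (ContinuousLinearMap.isPositive_def'.2
    ⟨((IsSelfAdjoint.all c).smul hσ).sub hρ, fun ζ => ?_⟩)
  rw [ContinuousLinearMap.reApplyInnerSelf_apply, sub_apply, inner_sub_left, map_sub, sub_nonneg,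
    smul_apply, inner_smul_left_eq_smul, RCLike.smul_re]
  exact h ζ

lemma opow_add_self_le_smul {s : ℝ} (hρ : 0 ≤ ρ) (hσ : 0 ≤ σ) (hs : 0 ≤ s)
    (h : ∀ ζ, ‖opow ρ s ζ‖ ≤ c * ‖opow σ s ζ‖) :
    opow ρ (s + s) ≤ c ^ 2 • opow σ (s + s) := by
  refine le_smul_of_re_inner_le (isSelfAdjoint_opow _ _) (isSelfAdjoint_opow _ _) fun ζ => ?_
  rw [re_inner_opow_add_self hρ hs, re_inner_opow_add_self hσ hs, ← mul_pow]
  exact pow_le_pow_left₀ (norm_nonneg _) (h ζ) 2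

lemma opow_half_mul_regInv_mul_opow_half_le_one (hρ : 0 ≤ ρ) (hε : 0 < ε) :
    opow ρ (1 / 2) * (regInv ρ ε * opow ρ (1 / 2)) ≤ 1 := by
  have hsqrt : ContinuousOn (fun x : ℝ => x ^ (1 / 2 : ℝ)) (spectrum ℝ ρ) :=
    (Real.continuous_rpow_const (by norm_num)).continuousOn
  have hinv := continuousOn_inv_add_spectrum hρ hε
  have hprod : ContinuousOn (fun x : ℝ => (x + ε)⁻¹ * x ^ (1 / 2 : ℝ)) (spectrum ℝ ρ) :=
    hinv.mul hsqrt
  rw [opow, regInv, ← cfc_mul _ _ ρ hinv hsqrt, ← cfc_mul _ _ ρ hsqrt hprod]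
  refine cfc_le_one _ _ fun x hx => ?_
  have hx0 : 0 ≤ x := spectrum_nonneg_of_nonneg hρ hx
  calc x ^ (1 / 2 : ℝ) * ((x + ε)⁻¹ * x ^ (1 / 2 : ℝ)) = √x * √x / (x + ε) := by
        rw [Real.sqrt_eq_rpow]; ring
    _ = x / (x + ε) := by rw [Real.mul_self_sqrt hx0]
    _ ≤ 1 := div_le_one_of_le₀ (by linarith) (by linarith)

lemma invForm_opow_half_le (hρ : 0 ≤ ρ) (ξ : E) :
    invForm ρ (opow ρ (1 / 2) ξ) ≤ ENNReal.ofReal (‖ξ‖ ^ 2) := by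
  refine iSup_le fun n => ENNReal.ofReal_le_ofReal ?_
  have h := re_inner_apply_le_of_le
    (opow_half_mul_regInv_mul_opow_half_le_one hρ (Real.exp_pos (-(n : ℝ)))) ξ
  rw [mul_apply_eq_comp, mul_apply_eq_comp, ← (isSelfAdjoint_opow ρ _).isSymmetric.apply_clm,
    one_apply_eq_self, inner_self_eq_norm_sq] at h
  exact h

lemma invForm_le_mul_invForm_of_le_smul (hρ : 0 ≤ ρ) (hσ : 0 ≤ σ) (hc : 0 < c) (h : ρ ≤ c • σ)
    (ξ : E) : invForm σ ξ ≤ ENNReal.ofReal c * invForm ρ ξ := by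
  refine iSup_le fun n => ?_
  obtain ⟨m, hm⟩ : ∃ m : ℕ, Real.exp (-(m : ℝ)) ≤ c * Real.exp (-(n : ℝ)) := by
    obtain ⟨m, hm⟩ := exists_nat_ge (n - Real.log c)
    refine ⟨m, ?_⟩
    calc Real.exp (-m) ≤ Real.exp (Real.log c + -n) := Real.exp_le_exp.2 (by linarith)
      _ = c * Real.exp (-n) := by rw [Real.exp_add, Real.exp_log hc]
  have hnm : invFormSeq σ ξ n ≤ c * invFormSeq ρ ξ m := by
    have hle := re_inner_apply_le_of_le
      (regInv_le_smul_regInv hρ hσ hc h (Real.exp_pos _) (Real.exp_pos _) hm) ξ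
    rwa [smul_apply, inner_smul_right_eq_smul, RCLike.smul_re] at hle
  calc ENNReal.ofReal (invFormSeq σ ξ n) ≤ ENNReal.ofReal (c * invFormSeq ρ ξ m) :=
        ENNReal.ofReal_le_ofReal hnm
    _ = ENNReal.ofReal c * ENNReal.ofReal (invFormSeq ρ ξ m) := ENNReal.ofReal_mul hc.le
    _ ≤ ENNReal.ofReal c * invForm ρ ξ := by
        gcongr
        exact le_iSup (fun k => ENNReal.ofReal (invFormSeq ρ ξ k)) m

end Forms

theorem statement5_general {ρ σ X : E →L[ℂ] E} {F : ℝ → E →L[ℂ] E} {M : ℝ}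
    (hρ : 0 ≤ ρ) (hσ : 0 ≤ σ)
    (hFcont : ContinuousOn F (Set.Ico 0 (1 / 2)))
    (hF : ∀ t ∈ Set.Ico 0 (1 / 2), F t * opow ρ t = opow ρ t * X)
    (hM : ∀ t ∈ Set.Ico 0 (1 / 2), ‖F t‖ ≤ M) (hσX : IsExpPerturbed ρ σ X) :
    (∀ ξ : E, invForm σ (opow ρ (1 / 2) ξ) ≤ ENNReal.ofReal (Real.exp M * ‖ξ‖ ^ 2)) ∧
    (∀ ξ : E, invForm σ ξ ≤ ENNReal.ofReal (Real.exp M) * invForm ρ ξ) ∧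
    Real.exp (-M) • ρ ≤ σ := by
  have hhalf : (0 : ℝ) ≤ 1 / 2 := by norm_num
  have hle : ρ ≤ Real.exp M • σ := by
    have hsq := opow_add_self_le_smul hρ hσ hhalf
      (norm_opow_apply_le_exp_mul_norm hρ hσ hσX hhalf hFcont hF hM)
    rwa [add_halves, opow_one hρ, opow_one hσ, ← Real.exp_nat_mul, Nat.cast_ofNat, mul_left_comm,
      mul_one_div_cancel two_ne_zero, mul_one] at hsq
  have hinv := invForm_le_mul_invForm_of_le_smul hρ hσ (Real.exp_pos M) hle
  refine ⟨fun ξ => ?_, hinv, ?_⟩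
  · rw [ENNReal.ofReal_mul (Real.exp_pos M).le]
    exact (hinv _).trans (by gcongr; exact invForm_opow_half_le hρ ξ)
  · calc Real.exp (-M) • ρ ≤ Real.exp (-M) • Real.exp M • σ :=
          smul_le_smul_of_nonneg_left hle (Real.exp_pos _).le
      _ = σ := by rw [smul_smul, ← Real.exp_add, neg_add_cancel, Real.exp_zero, one_smul]

end PositiveOperators

lemma ofReal_mem_ball_zero {t r : ℝ} (ht : t ∈ Set.Ico 0 r) : (t : ℂ) ∈ ball (0 : ℂ) r := by
  simpa only [mem_ball_zero_iff, Complex.norm_of_nonneg ht.1] using ht.2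

/-- Let `ρ = exp (-H₀)` and `σ = ρ_X = exp (-(H₀+X))` be finite faithful
weights, with `X` bounded self-adjoint satisfying the Araki condition for `ρ` (with Araki
family `F` and `M = ‖X‖_A` bounding `‖F t‖` on the disc).  Then, as quadratic forms,
`ρ^{1/2} ρ_X⁻¹ ρ^{1/2} ≤ e^M · I`, hence `ρ_X⁻¹ ≤ e^M ρ⁻¹`, and by operator-monotone
decrease of the inverse, `ρ_X ≥ e^{-M} ρ` in the Loewner order. -/
theorem statement5 {ι : Type*} (b : HilbertBasis ι ℂ H) (ρ σ X : H →L[ℂ] H)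
    (hρ : IsFiniteWeight b ρ) (hσ : IsFiniteWeight b σ) (hX : IsSelfAdjoint X)
    (F : ℂ → H →L[ℂ] H) (hF : IsArakiFamily ρ X F)
    (M : ℝ) (hM : ∀ t ∈ ball (0:ℂ) (1/2), ‖F t‖ ≤ M)
    (hσX : IsExpPerturbed ρ σ X) :
    (∀ ξ : H, invForm σ ((opow ρ (1/2)) ξ) ≤ ENNReal.ofReal (Real.exp M * ‖ξ‖ ^ 2)) ∧
    (∀ ξ : H, invForm σ ξ ≤ ENNReal.ofReal (Real.exp M) * invForm ρ ξ) ∧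
    Real.exp (-M) • ρ ≤ σ :=
  statement5_general hρ.1 hσ.1
    (hF.1.continuousOn.comp Complex.continuous_ofReal.continuousOn fun _ => ofReal_mem_ball_zero)
    (fun t ht => hF.2.2.1 t ht.1 ht.2) (fun t ht => hM t (ofReal_mem_ball_zero ht)) hσX
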